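/- arXiv:2209.10217 — 2 statements merged into one kernel-verified Lean document; each statement's English description precedes it below -/
import Mathlib

section
/- Let P be a Borel probability measure on P₂(ℝ), the space of Borel probability measures on ℝ with finite second moment equipped with the 2-Wasserstein distance. For ρ ∈ P₂(ℝ) let Q_ρ : (0,1) → ℝ denote its quantile function (the generalized inverse of the cumulative distribution function of ρ). Then the measure μ_P = (∫ Q_ρ dP(ρ))_# λ_{[0,1]}, i.e. the pushforward of the Lebesgue measure on [0,1] under the map t ↦ ∫ Q_ρ(t) dP(ρ), is a Wasserstein barycenter of P: it minimizes μ ↦ ½∫ W₂²(ρ,μ) dP(ρ) over P₂(ℝ). -/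
noncomputable section

open MeasureTheory Metric Set
open scoped ENNReal NNReal RealInnerProductSpace

/-- The set of transport plans (couplings) between two measures. -/
def Couplings {α β : Type*} [MeasurableSpace α] [MeasurableSpace β]
    (ρ : Measure α) (μ : Measure β) : Set (Measure (α × β)) :=
  {γ | γ.map Prod.fst = ρ ∧ γ.map Prod.snd = μ}

/-- The 2-Wasserstein distance between two measures on a normed space. -/
def W2 {α : Type*} [MeasurableSpace α] [NormedAddCommGroup α] (ρ μ : Measure α) : ℝ :=
  Real.sqrt (sInf ((fun γ : Measure (α × α) => ∫ p, ‖p.1 - p.2‖ ^ 2 ∂γ) '' Couplings ρ μ))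

/-- The 1-Wasserstein distance between measures on the space of measures,
with ground cost `W2`. -/
def Wc1 {α : Type*} [MeasurableSpace α] [NormedAddCommGroup α]
    (P Q : Measure (Measure α)) : ℝ :=
  sInf ((fun γ : Measure (Measure α × Measure α) => ∫ p, W2 p.1 p.2 ∂γ) '' Couplings P Q)

/-- The variance functional `F_P`. -/
def Fvar {α : Type*} [MeasurableSpace α] [NormedAddCommGroup α]
    (P : Measure (Measure α)) (μ : Measure α) : ℝ :=
  (1 / 2) * ∫ ρ, W2 ρ μ ^ 2 ∂P

abbrev Euc (d : ℕ) : Type := EuclideanSpace ℝ (Fin d)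

/-- `ρ` is a Borel probability measure concentrated on `Ω`. -/
def ProbOn {d : ℕ} (Ω : Set (Euc d)) (ρ : Measure (Euc d)) : Prop :=
  IsProbabilityMeasure ρ ∧ ρ Ωᶜ = 0

/-- `P` is a Borel probability measure on the probability measures over `Ω`. -/
def PProbOn {d : ℕ} (Ω : Set (Euc d)) (P : Measure (Measure (Euc d))) : Prop :=
  IsProbabilityMeasure P ∧ P {ρ | ¬ ProbOn Ω ρ} = 0

/-- `μ` is a Wasserstein barycenter of `P` (a minimizer of `Fvar P` over `P(Ω)`). -/
def IsBary {d : ℕ} (Ω : Set (Euc d)) (P : Measure (Measure (Euc d)))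
    (μ : Measure (Euc d)) : Prop :=
  ProbOn Ω μ ∧ ∀ ν, ProbOn Ω ν → Fvar P μ ≤ Fvar P ν

/-- `ρ ∈ P₂(ℝ)`: a Borel probability measure on `ℝ` with finite second moment. -/
def FinSecond (ρ : Measure ℝ) : Prop :=
  IsProbabilityMeasure ρ ∧ (∫⁻ x, ENNReal.ofReal (x ^ 2) ∂ρ) < ⊤

/-- The quantile function of `ρ`: the generalized inverse of its cumulative
distribution function. -/
def quantile (ρ : Measure ℝ) (t : ℝ) : ℝ :=
  sInf {x : ℝ | t ≤ (ρ (Set.Iic x)).toReal}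

lemma aux_ms {α : Type*} [MeasurableSpace α] (f g h k : α → ℝ) (hf : Measurable f)
    (hg : Measurable g) (hh : Measurable h) (hk : Measurable k) :
    MeasurableSet {w | f w ≤ g w ∧ h w < k w} :=
  (measurableSet_le hf hg).inter (measurableSet_lt hh hk)

/-- Mean minimizes quadratic deviation. -/
lemma aux_var {Ω : Type*} [MeasurableSpace Ω] (P : Measure Ω) [IsProbabilityMeasure P]
    (f : Ω → ℝ) (hf : AEStronglyMeasurable f P) (c : ℝ) :
    ∫⁻ ω, ENNReal.ofReal ((f ω - ∫ x, f x ∂P) ^ 2) ∂P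
      ≤ ∫⁻ ω, ENNReal.ofReal ((f ω - c) ^ 2) ∂P ∧
    ENNReal.ofReal ((∫ x, f x ∂P - c) ^ 2) ≤ ∫⁻ ω, ENNReal.ofReal ((f ω - c) ^ 2) ∂P := by
  by_cases h : ∫⁻ ω, ENNReal.ofReal ((f ω - c) ^ 2) ∂P = ⊤
  · rw [h]; exact ⟨le_top, le_top⟩
  have hm : AEStronglyMeasurable (fun ω => f ω - c) P := hf.sub aestronglyMeasurable_const
  have hi2 : Integrable (fun ω => (f ω - c) ^ 2) P := by
    refine ⟨hm.pow 2, ?_⟩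
    rw [hasFiniteIntegral_iff_ofReal (ae_of_all _ fun ω => sq_nonneg _)]
    exact lt_top_iff_ne_top.2 h
  have hL : MemLp (fun ω => f ω - c) 2 P := (memLp_two_iff_integrable_sq hm).2 hi2
  have hi1 : Integrable (fun ω => f ω - c) P := hL.integrable (by norm_num)
  have hfi : Integrable f P := by
    have := hi1.add (integrable_const c)
    exact this.congr (ae_of_all _ fun ω => by simp)
  set m := ∫ x, f x ∂P with hmdef
  have h1 : ∫ x, (f x - c) ∂P = m - c := by
    rw [integral_sub hfi (integrable_const c)]; simp [hmdef]
  have hexp : ∀ ω, (f ω - m) ^ 2 = (f ω - c) ^ 2 - 2 * (m - c) * (f ω - c) + (m - c) ^ 2 := by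
    intro ω; ring
  have hi3 : Integrable (fun ω => (f ω - m) ^ 2) P := by
    simp_rw [hexp]
    exact (hi2.sub (hi1.const_mul _)).add (integrable_const _)
  have h2 : ∫ ω, (f ω - m) ^ 2 ∂P = ∫ ω, (f ω - c) ^ 2 ∂P - (m - c) ^ 2 := by
    simp_rw [hexp]
    have hd : Integrable (fun ω => (f ω - c) ^ 2 - 2 * (m - c) * (f ω - c)) P :=
      hi2.sub (hi1.const_mul _)
    rw [integral_add hd (integrable_const _), integral_sub hi2 (hi1.const_mul _), integral_const_mul, h1]
    simp; ring
  have h3 : 0 ≤ ∫ ω, (f ω - m) ^ 2 ∂P := integral_nonneg fun ω => sq_nonneg _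
  rw [← ofReal_integral_eq_lintegral_ofReal hi2 (ae_of_all _ fun ω => sq_nonneg _),
    ← ofReal_integral_eq_lintegral_ofReal hi3 (ae_of_all _ fun ω => sq_nonneg _)]
  constructor
  · apply ENNReal.ofReal_le_ofReal; nlinarith [sq_nonneg (m - c)]
  · apply ENNReal.ofReal_le_ofReal; linarith

/-- Layer-cake representation of the quadratic cost. -/
lemma aux_layer (γ : Measure (ℝ × ℝ)) [SFinite γ] :
    ∫⁻ p, ENNReal.ofReal ((p.1 - p.2) ^ 2) ∂γ =
      (∫⁻ z : ℝ × ℝ, γ {p | p.1 ≤ min z.1 z.2 ∧ max z.1 z.2 < p.2}) +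
      ∫⁻ z : ℝ × ℝ, γ {p | p.2 ≤ min z.1 z.2 ∧ max z.1 z.2 < p.1} := by
  have hm1 : MeasurableSet {w : (ℝ × ℝ) × (ℝ × ℝ) | w.1.1 ≤ min w.2.1 w.2.2 ∧
      max w.2.1 w.2.2 < w.1.2} :=
    by
      refine aux_ms _ _ _ _ ?_ ?_ ?_ ?_ <;> fun_prop
  have hm2 : MeasurableSet {w : (ℝ × ℝ) × (ℝ × ℝ) | w.1.2 ≤ min w.2.1 w.2.2 ∧
      max w.2.1 w.2.2 < w.1.1} :=
    by
      refine aux_ms _ _ _ _ ?_ ?_ ?_ ?_ <;> fun_prop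
  have e1 := (Measure.prod_apply (μ := γ) (ν := (volume : Measure (ℝ × ℝ))) hm1).symm.trans
    (Measure.prod_apply_symm hm1)
  have e2 := (Measure.prod_apply (μ := γ) (ν := (volume : Measure (ℝ × ℝ))) hm2).symm.trans
    (Measure.prod_apply_symm hm2)
  simp only [preimage_ofPred_eq] at e1 e2
  rw [← e1, ← e2, ← lintegral_add_left]
  · apply lintegral_congr
    intro p
    have s : ∀ x y : ℝ, volume {z : ℝ × ℝ | x ≤ min z.1 z.2 ∧ max z.1 z.2 < y} =
        ENNReal.ofReal (y - x) * ENNReal.ofReal (y - x) := by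
      intro x y
      have : {z : ℝ × ℝ | x ≤ min z.1 z.2 ∧ max z.1 z.2 < y} = Ico x y ×ˢ Ico x y := by
        ext z; simp; tauto
      rw [this, Measure.volume_eq_prod, Measure.prod_prod, Real.volume_Ico]
    rw [s, s]
    rcases le_total p.1 p.2 with h | h
    · rw [ENNReal.ofReal_of_nonpos (sub_nonpos.2 h), ← ENNReal.ofReal_mul (sub_nonneg.2 h)]
      simp; congr 1; ring
    · rw [ENNReal.ofReal_of_nonpos (sub_nonpos.2 h), ← ENNReal.ofReal_mul (sub_nonneg.2 h)]
      simp; congr 1; ring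
  · exact measurable_measure_prodMk_left hm1

lemma aux_quantile_le (ρ : Measure ℝ) [IsProbabilityMeasure ρ] {t : ℝ} (ht : t ∈ Ioo (0:ℝ) 1)
    (x : ℝ) : quantile ρ t ≤ x ↔ t ≤ (ρ (Iic x)).toReal := by
  have hcdf : ∀ y, (ρ (Iic y)).toReal = ProbabilityTheory.cdf ρ y := fun y => by
    rw [ProbabilityTheory.cdf_eq_real]; rfl
  unfold quantile
  simp_rw [hcdf]
  have hbot := ProbabilityTheory.tendsto_cdf_atBot ρ
  have htop := ProbabilityTheory.tendsto_cdf_atTop ρ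
  have hne : {y | t ≤ ProbabilityTheory.cdf ρ y}.Nonempty :=
    ((htop.eventually (lt_mem_nhds ht.2)).exists).imp fun y hy => le_of_lt hy
  obtain ⟨b, hb⟩ := (hbot.eventually (gt_mem_nhds ht.1)).exists
  have hbdd : BddBelow {y | t ≤ ProbabilityTheory.cdf ρ y} := by
    refine ⟨b, fun y hy => ?_⟩
    by_contra hlt
    have := ProbabilityTheory.monotone_cdf ρ (le_of_lt (not_le.1 hlt))
    exact absurd (lt_of_le_of_lt (le_trans hy this) hb) (lt_irrefl _)
  constructor
  · intro h
    have hc : ∀ y ∈ Ioi x, t ≤ ProbabilityTheory.cdf ρ y := by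
      intro y hy
      obtain ⟨z, hz, hzy⟩ := exists_lt_of_csInf_lt hne (lt_of_le_of_lt h hy)
      exact le_trans hz (ProbabilityTheory.monotone_cdf ρ hzy.le)
    have hr := ((ProbabilityTheory.cdf ρ).right_continuous x).mono_left
      (nhdsWithin_mono x Ioi_subset_Ici_self)
    exact ge_of_tendsto hr (Filter.eventually_of_mem self_mem_nhdsWithin hc)
  · intro h
    exact csInf_le hbdd h

open Classical in
/-- Cleaned-up quantile. -/
def qq (ρ : Measure ℝ) (t : ℝ) : ℝ :=
  if ρ univ = 1 ∧ t ∈ Ioo (0:ℝ) 1 then quantile ρ t else 0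

lemma qq_meas : Measurable (fun p : Measure ℝ × ℝ => qq p.1 p.2) := by
  refine measurable_of_Iic fun x => ?_
  have hD : MeasurableSet {p : Measure ℝ × ℝ | p.1 univ = 1 ∧ p.2 ∈ Ioo (0:ℝ) 1} := by
    refine MeasurableSet.inter ?_ (measurable_snd measurableSet_Ioo)
    exact ((Measure.measurable_coe MeasurableSet.univ).comp measurable_fst)
      (measurableSet_singleton 1)
  have hE : MeasurableSet {p : Measure ℝ × ℝ | p.2 ≤ (p.1 (Iic x)).toReal} :=
    measurableSet_le measurable_snd
      ((Measure.measurable_coe measurableSet_Iic).comp measurable_fst).ennreal_toReal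
  have : (fun p : Measure ℝ × ℝ => qq p.1 p.2) ⁻¹' Iic x =
      ({p | p.1 univ = 1 ∧ p.2 ∈ Ioo (0:ℝ) 1} ∩ {p | p.2 ≤ (p.1 (Iic x)).toReal}) ∪
      ({p | p.1 univ = 1 ∧ p.2 ∈ Ioo (0:ℝ) 1}ᶜ ∩ {_p | 0 ≤ x}) := by
    ext p
    by_cases h : p.1 univ = 1 ∧ p.2 ∈ Ioo (0:ℝ) 1
    · have : IsProbabilityMeasure p.1 := ⟨h.1⟩
      have := aux_quantile_le p.1 h.2 x
      have e : qq p.1 p.2 = quantile p.1 p.2 := if_pos h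
      simp only [mem_preimage, mem_Iic, e, mem_union, mem_inter_iff, mem_ofPred_eq,
        mem_compl_iff, this]
      tauto
    · have e : qq p.1 p.2 = 0 := if_neg h
      simp only [mem_preimage, mem_Iic, e, mem_union, mem_inter_iff, mem_ofPred_eq,
        mem_compl_iff]
      tauto
  rw [this]
  exact (hD.inter hE).union (hD.compl.inter (MeasurableSet.const _))

/-- Lebesgue on `(0,1)`. -/
abbrev lam : Measure ℝ := volume.restrict (Ioo (0:ℝ) 1)

instance : IsProbabilityMeasure lam := ⟨by simp [lam]⟩

lemma qq_meas_right (ρ : Measure ℝ) : Measurable (qq ρ) :=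
  qq_meas.comp (measurable_const.prodMk measurable_id)

lemma qq_meas_left (t : ℝ) : Measurable (fun ρ => qq ρ t) :=
  qq_meas.comp (measurable_id.prodMk measurable_const)

lemma qq_le (ρ : Measure ℝ) [IsProbabilityMeasure ρ] {t : ℝ} (ht : t ∈ Ioo (0:ℝ) 1)
    (x : ℝ) : qq ρ t ≤ x ↔ t ≤ (ρ (Iic x)).toReal := by
  rw [qq, if_pos ⟨measure_univ, ht⟩, aux_quantile_le ρ ht]

lemma qq_cross (ρ ν : Measure ℝ) [IsProbabilityMeasure ρ] [IsProbabilityMeasure ν] (a b : ℝ) :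
    lam {t | qq ρ t ≤ a ∧ b < qq ν t} = ρ (Iic a) - ν (Iic b) := by
  have e : {t | qq ρ t ≤ a ∧ b < qq ν t} ∩ Ioo 0 1 =
      (Ioc (ν (Iic b)).toReal (ρ (Iic a)).toReal) ∩ Ioo 0 1 := by
    ext t
    simp only [mem_inter_iff, mem_ofPred_eq, mem_Ioc]
    refine and_congr_left fun ht => ?_
    rw [qq_le ρ ht, ← not_le, qq_le ν ht, not_le, and_comm]
  have hρ : (ρ (Iic a)).toReal ≤ 1 := by
    have := ENNReal.toReal_mono ENNReal.one_ne_top (prob_le_one (μ := ρ) (s := Iic a))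
    simpa using this
  have hms : MeasurableSet {t | qq ρ t ≤ a ∧ b < qq ν t} :=
    (measurableSet_le (qq_meas_right ρ) measurable_const).inter
      (measurableSet_lt measurable_const (qq_meas_right ν))
  rw [lam, Measure.restrict_apply hms, e, ← Measure.restrict_apply measurableSet_Ioc,
    Measure.restrict_congr_set Ioo_ae_eq_Ioc, Measure.restrict_apply measurableSet_Ioc,
    Ioc_inter_Ioc, Real.volume_Ioc, max_eq_left ENNReal.toReal_nonneg, min_eq_left hρ,
    ENNReal.ofReal_sub _ ENNReal.toReal_nonneg, ENNReal.ofReal_toReal (measure_ne_top _ _),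
    ENNReal.ofReal_toReal (measure_ne_top _ _)]

lemma qq_map (ρ : Measure ℝ) [IsProbabilityMeasure ρ] : lam.map (qq ρ) = ρ := by
  have : IsProbabilityMeasure (lam.map (qq ρ)) :=
    Measure.isProbabilityMeasure_map (qq_meas_right ρ).aemeasurable
  refine Measure.ext_of_Iic _ _ fun x => ?_
  rw [Measure.map_apply (qq_meas_right ρ) measurableSet_Iic]
  have hρ : (ρ (Iic x)).toReal ≤ 1 := by
    have := ENNReal.toReal_mono ENNReal.one_ne_top (prob_le_one (μ := ρ) (s := Iic x))
    simpa using this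
  have e : (qq ρ ⁻¹' Iic x) ∩ Ioo 0 1 = (Iic (ρ (Iic x)).toReal) ∩ Ioo 0 1 := by
    ext t
    simp only [mem_inter_iff, mem_preimage, mem_Iic]
    refine and_congr_left fun ht => ?_
    rw [qq_le ρ ht]
  rw [lam, Measure.restrict_apply (qq_meas_right ρ measurableSet_Iic), e,
    ← Measure.restrict_apply measurableSet_Iic,
    Measure.restrict_congr_set Ioo_ae_eq_Ioc, Measure.restrict_apply measurableSet_Iic,
    inter_comm, Ioc_inter_Iic, min_eq_right hρ, Real.volume_Ioc, sub_zero,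
    ENNReal.ofReal_toReal (measure_ne_top _ _)]

/-- Transport cost. -/
def KK (γ : Measure (ℝ × ℝ)) : ℝ≥0∞ := ∫⁻ p, ENNReal.ofReal ((p.1 - p.2) ^ 2) ∂γ

/-- Quantile cost. -/
def CC (ρ ν : Measure ℝ) : ℝ≥0∞ := ∫⁻ t, ENNReal.ofReal ((qq ρ t - qq ν t) ^ 2) ∂lam

lemma sq_meas : Measurable fun p : ℝ × ℝ => ENNReal.ofReal ((p.1 - p.2) ^ 2) := by fun_prop

lemma KK_map (f g : ℝ → ℝ) (hf : Measurable f) (hg : Measurable g) :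
    KK (lam.map fun t => (f t, g t)) = ∫⁻ t, ENNReal.ofReal ((f t - g t) ^ 2) ∂lam := by
  rw [KK, lintegral_map sq_meas (hf.prodMk hg)]

lemma coupling_prob {ρ ν : Measure ℝ} [IsProbabilityMeasure ρ] {γ : Measure (ℝ × ℝ)}
    (h : γ ∈ Couplings ρ ν) : IsProbabilityMeasure γ := by
  constructor
  have := congrArg (fun m : Measure ℝ => m univ) h.1
  simpa [Measure.map_apply measurable_fst MeasurableSet.univ] using this

lemma map_coupling (f g : ℝ → ℝ) (hf : Measurable f) (hg : Measurable g) :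
    (lam.map fun t => (f t, g t)) ∈ Couplings (lam.map f) (lam.map g) := by
  constructor
  · rw [Measure.map_map measurable_fst (hf.prodMk hg)]; rfl
  · rw [Measure.map_map measurable_snd (hf.prodMk hg)]; rfl

lemma CC_le_KK (ρ ν : Measure ℝ) [IsProbabilityMeasure ρ] [IsProbabilityMeasure ν]
    (γ : Measure (ℝ × ℝ)) (h : γ ∈ Couplings ρ ν) : CC ρ ν ≤ KK γ := by
  have := coupling_prob h
  have hpair : Measurable fun t => (qq ρ t, qq ν t) := (qq_meas_right ρ).prodMk (qq_meas_right ν)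
  have : IsProbabilityMeasure (lam.map fun t => (qq ρ t, qq ν t)) :=
    Measure.isProbabilityMeasure_map hpair.aemeasurable
  have hf : ∀ x, γ {p | p.1 ≤ x} = ρ (Iic x) := fun x => by
    rw [← h.1, Measure.map_apply measurable_fst measurableSet_Iic]; rfl
  have hs : ∀ x, γ {p | p.2 ≤ x} = ν (Iic x) := fun x => by
    rw [← h.2, Measure.map_apply measurable_snd measurableSet_Iic]; rfl
  have m1 : ∀ z : ℝ × ℝ, MeasurableSet {p : ℝ × ℝ | p.1 ≤ min z.1 z.2 ∧ max z.1 z.2 < p.2} :=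
    fun z => by
      refine aux_ms _ _ _ _ ?_ ?_ ?_ ?_ <;> fun_prop
  have m2 : ∀ z : ℝ × ℝ, MeasurableSet {p : ℝ × ℝ | p.2 ≤ min z.1 z.2 ∧ max z.1 z.2 < p.1} :=
    fun z => by
      refine aux_ms _ _ _ _ ?_ ?_ ?_ ?_ <;> fun_prop
  rw [CC, ← KK_map _ _ (qq_meas_right ρ) (qq_meas_right ν), KK, KK, aux_layer, aux_layer]
  refine add_le_add (lintegral_mono fun z => ?_) (lintegral_mono fun z => ?_)
  · rw [Measure.map_apply hpair (m1 z)]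
    refine (qq_cross ρ ν _ _).trans_le ?_
    rw [tsub_le_iff_right, ← hf, ← hs]
    refine le_trans (measure_mono ?_) (measure_union_le _ _)
    intro p hp
    by_cases h' : p.2 ≤ max z.1 z.2
    · exact Or.inr h'
    · exact Or.inl ⟨hp, not_le.1 h'⟩
  · rw [Measure.map_apply hpair (m2 z)]
    refine (qq_cross ν ρ _ _).trans_le ?_
    rw [tsub_le_iff_right, ← hf, ← hs]
    refine le_trans (measure_mono ?_) (measure_union_le _ _)
    intro p hp
    by_cases h' : p.1 ≤ max z.1 z.2
    · exact Or.inr h'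
    · exact Or.inl ⟨hp, not_le.1 h'⟩

lemma int_eq_KK (γ : Measure (ℝ × ℝ)) : ∫ p, ‖p.1 - p.2‖ ^ 2 ∂γ = (KK γ).toReal := by
  rw [integral_eq_lintegral_of_nonneg_ae (ae_of_all _ fun p => by positivity)
    (by fun_prop)]
  simp [KK]

lemma W2_sq_le {ρ ν : Measure ℝ} {γ : Measure (ℝ × ℝ)} (h : γ ∈ Couplings ρ ν) :
    W2 ρ ν ^ 2 ≤ (KK γ).toReal := by
  have hnn : ∀ r ∈ ((fun γ : Measure (ℝ × ℝ) => ∫ p, ‖p.1 - p.2‖ ^ 2 ∂γ) '' Couplings ρ ν),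
      0 ≤ r := by
    rintro _ ⟨g, -, rfl⟩
    exact integral_nonneg fun p => by positivity
  rw [W2, Real.sq_sqrt (Real.sInf_nonneg hnn), ← int_eq_KK]
  exact csInf_le ⟨0, hnn⟩ ⟨γ, h, rfl⟩

lemma sq_bound (a b : ℝ) : ENNReal.ofReal ((a - b) ^ 2) ≤
    2 * ENNReal.ofReal (a ^ 2) + 2 * ENNReal.ofReal (b ^ 2) := by
  have h2 : (2 : ℝ≥0∞) = ENNReal.ofReal 2 := by simp
  rw [h2, ← ENNReal.ofReal_mul (by norm_num), ← ENNReal.ofReal_mul (by norm_num),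
    ← ENNReal.ofReal_add (by positivity) (by positivity)]
  apply ENNReal.ofReal_le_ofReal
  nlinarith [sq_nonneg (a + b)]

lemma KK_lt_top {ρ ν : Measure ℝ} (hρ : FinSecond ρ) (hν : FinSecond ν) {γ : Measure (ℝ × ℝ)}
    (h : γ ∈ Couplings ρ ν) : KK γ ≠ ⊤ := by
  have hle : KK γ ≤ 2 * ∫⁻ x, ENNReal.ofReal (x ^ 2) ∂ρ + 2 * ∫⁻ x, ENNReal.ofReal (x ^ 2) ∂ν := by
    rw [← h.1, ← h.2, lintegral_map (by fun_prop) measurable_fst,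
      lintegral_map (by fun_prop) measurable_snd, ← lintegral_const_mul _ (by fun_prop),
      ← lintegral_const_mul _ (by fun_prop), ← lintegral_add_left (by fun_prop)]
    exact lintegral_mono fun p => sq_bound _ _
  exact ne_top_of_le_ne_top (ENNReal.add_ne_top.2
    ⟨ENNReal.mul_ne_top (by simp) hρ.2.ne, ENNReal.mul_ne_top (by simp) hν.2.ne⟩) hle

lemma W2_sq_eq {ρ ν : Measure ℝ} (hρ : FinSecond ρ) (hν : FinSecond ν) :
    W2 ρ ν ^ 2 = (CC ρ ν).toReal := by
  have := hρ.1
  have := hν.1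
  have hc := map_coupling _ _ (qq_meas_right ρ) (qq_meas_right ν)
  have hK := KK_map _ _ (qq_meas_right ρ) (qq_meas_right ν)
  rw [qq_map, qq_map] at hc
  apply le_antisymm
  · have := W2_sq_le hc
    rwa [hK] at this
  · have hge : (CC ρ ν).toReal ≤ sInf ((fun γ : Measure (ℝ × ℝ) =>
        ∫ p, ‖p.1 - p.2‖ ^ 2 ∂γ) '' Couplings ρ ν) := by
      refine le_csInf (Set.Nonempty.image _ ⟨_, hc⟩) ?_
      rintro _ ⟨g, hg, rfl⟩
      simp only [int_eq_KK]
      exact ENNReal.toReal_mono (KK_lt_top hρ hν hg) (CC_le_KK ρ ν g hg)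
    rw [W2, Real.sq_sqrt (le_trans ENNReal.toReal_nonneg hge)]
    exact hge

lemma qq_moment (ρ : Measure ℝ) [IsProbabilityMeasure ρ] :
    ∫⁻ t, ENNReal.ofReal (qq ρ t ^ 2) ∂lam = ∫⁻ x, ENNReal.ofReal (x ^ 2) ∂ρ := by
  conv_rhs => rw [← qq_map ρ]
  rw [lintegral_map (by fun_prop) (qq_meas_right ρ)]

/-- **One-dimensional Wasserstein barycenters via quantile averaging.**
The pushforward of Lebesgue measure on `[0,1]` under the `P`-average of the
quantile functions is a Wasserstein barycenter of `P`: it lies in `P₂(ℝ)` and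
minimizes the variance functional `F_P` over `P₂(ℝ)`. -/
theorem quantile_average_is_barycenter
    (P : Measure (Measure ℝ)) (hP : IsProbabilityMeasure P)
    (hPsupp : P {ρ | ¬ FinSecond ρ} = 0)
    (hPmom : (∫⁻ ρ, ∫⁻ x, ENNReal.ofReal (x ^ 2) ∂ρ ∂P) < ⊤) :
    FinSecond
      (Measure.map (fun t => ∫ ρ, quantile ρ t ∂P)
        (volume.restrict (Set.Icc (0 : ℝ) 1))) ∧
    ∀ ν : Measure ℝ, FinSecond ν →
      Fvar P (Measure.map (fun t => ∫ ρ, quantile ρ t ∂P)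
          (volume.restrict (Set.Icc (0 : ℝ) 1))) ≤ Fvar P ν := by
  have hae : ∀ᵐ ρ ∂P, FinSecond ρ := hPsupp
  set Qb : ℝ → ℝ := fun t => ∫ ρ, qq ρ t ∂P with hQb
  have hQm : Measurable Qb := by
    have : StronglyMeasurable (fun p : ℝ × Measure ℝ => qq p.2 p.1) :=
      (qq_meas.comp measurable_swap).stronglyMeasurable
    exact this.integral_prod_right.measurable
  have hmu : Measure.map (fun t => ∫ ρ, quantile ρ t ∂P)
      (volume.restrict (Set.Icc (0 : ℝ) 1)) = lam.map Qb := by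
    rw [← Measure.restrict_congr_set (Ioo_ae_eq_Icc (μ := volume) (a := (0:ℝ)) (b := 1))]
    apply Measure.map_congr
    filter_upwards [ae_restrict_mem measurableSet_Ioo] with t ht
    apply integral_congr_ae
    filter_upwards [hae] with ρ hρ
    rw [qq, if_pos ⟨hρ.1.measure_univ, ht⟩]
  rw [hmu]
  have hmom : ∫⁻ ρ, ∫⁻ t, ENNReal.ofReal (qq ρ t ^ 2) ∂lam ∂P < ⊤ := by
    refine lt_of_eq_of_lt (lintegral_congr_ae ?_) hPmom
    filter_upwards [hae] with ρ hρ
    have := hρ.1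
    exact qq_moment ρ
  have hswap : ∀ g : ℝ → ℝ, Measurable g →
      ∫⁻ ρ, ∫⁻ t, ENNReal.ofReal ((qq ρ t - g t) ^ 2) ∂lam ∂P =
      ∫⁻ t, ∫⁻ ρ, ENNReal.ofReal ((qq ρ t - g t) ^ 2) ∂P ∂lam := by
    intro g hg
    apply lintegral_lintegral_swap
    exact (((qq_meas.sub (hg.comp measurable_snd)).pow_const 2).ennreal_ofReal).aemeasurable
  have hjm : ∀ g : ℝ → ℝ, Measurable g →
      Measurable fun ρ => ∫⁻ t, ENNReal.ofReal ((qq ρ t - g t) ^ 2) ∂lam := by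
    intro g hg
    exact Measurable.lintegral_prod_right'
      (f := fun p : Measure ℝ × ℝ => ENNReal.ofReal ((qq p.1 p.2 - g p.2) ^ 2))
      ((qq_meas.sub (hg.comp measurable_snd)).pow_const 2).ennreal_ofReal
  have hqs : ∀ t, AEStronglyMeasurable (fun ρ => qq ρ t) P := fun t =>
    (qq_meas_left t).aestronglyMeasurable
  constructor
  · refine ⟨Measure.isProbabilityMeasure_map hQm.aemeasurable, ?_⟩
    rw [lintegral_map (by fun_prop) hQm]
    refine lt_of_le_of_lt ?_ hmom
    have h0 := hswap (fun _ => 0) measurable_const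
    simp only [sub_zero] at h0
    rw [h0]
    refine lintegral_mono fun t => ?_
    have := (aux_var P (fun ρ => qq ρ t) (hqs t) 0).2
    simpa [hQb] using this
  · intro ν hν
    have := hν.1
    have hfin : ∫⁻ ρ, CC ρ ν ∂P ≠ ⊤ := by
      have hle : ∫⁻ ρ, CC ρ ν ∂P ≤ ∫⁻ ρ, (2 * (∫⁻ t, ENNReal.ofReal (qq ρ t ^ 2) ∂lam) +
          2 * ∫⁻ x, ENNReal.ofReal (x ^ 2) ∂ν) ∂P := by
        refine lintegral_mono fun ρ => ?_
        have m1 : Measurable fun t => ENNReal.ofReal (qq ρ t ^ 2) :=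
          ((qq_meas_right ρ).pow_const 2).ennreal_ofReal
        have m2 : Measurable fun t => ENNReal.ofReal (qq ν t ^ 2) :=
          ((qq_meas_right ν).pow_const 2).ennreal_ofReal
        rw [← qq_moment ν, ← lintegral_const_mul _ m1, ← lintegral_const_mul _ m2,
          ← lintegral_add_left (m1.const_mul _)]
        exact lintegral_mono fun t => sq_bound _ _
      refine ne_top_of_le_ne_top ?_ hle
      rw [lintegral_add_right _ measurable_const, lintegral_const_mul' _ _ (by simp)]
      simp only [lintegral_const, measure_univ, mul_one]
      exact ENNReal.add_ne_top.2
        ⟨ENNReal.mul_ne_top (by simp) hmom.ne, ENNReal.mul_ne_top (by simp) hν.2.ne⟩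
    have hcmp : ∫⁻ ρ, ∫⁻ t, ENNReal.ofReal ((qq ρ t - Qb t) ^ 2) ∂lam ∂P ≤ ∫⁻ ρ, CC ρ ν ∂P := by
      simp only [CC]
      rw [hswap _ hQm, hswap _ (qq_meas_right ν)]
      exact lintegral_mono fun t => (aux_var P (fun ρ => qq ρ t) (hqs t) (qq ν t)).1
    have hfinQ := ne_top_of_le_ne_top hfin hcmp
    have hCm : Measurable fun ρ => CC ρ ν := hjm _ (qq_meas_right ν)
    have hR : ∫ ρ, W2 ρ ν ^ 2 ∂P = (∫⁻ ρ, CC ρ ν ∂P).toReal := by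
      rw [← integral_toReal hCm.aemeasurable (ae_lt_top hCm hfin)]
      apply integral_congr_ae
      filter_upwards [hae] with ρ hρ
      exact W2_sq_eq hρ hν
    have hL : ∫ ρ, W2 ρ (lam.map Qb) ^ 2 ∂P ≤
        (∫⁻ ρ, ∫⁻ t, ENNReal.ofReal ((qq ρ t - Qb t) ^ 2) ∂lam ∂P).toReal := by
      rw [← integral_toReal (hjm _ hQm).aemeasurable (ae_lt_top (hjm _ hQm) hfinQ)]
      apply integral_mono_of_nonneg (ae_of_all _ fun ρ => sq_nonneg _)
        (integrable_toReal_of_lintegral_ne_top (hjm _ hQm).aemeasurable hfinQ)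
      filter_upwards [hae] with ρ hρ
      have := hρ.1
      have hc := map_coupling _ _ (qq_meas_right ρ) hQm
      rw [qq_map] at hc
      have := W2_sq_le hc
      rwa [KK_map _ _ (qq_meas_right ρ) hQm] at this
    unfold Fvar
    rw [hR]
    have := ENNReal.toReal_mono hfin hcmp
    linarith
end
end

section
/- In dimension 1, for ε ∈ (0,1) let μ^ε = (½ − ε/2)(δ_{−1} + δ_1) + ε·δ_0 and μ^0 = ½(δ_{−1} + δ_1), and let ρ be the Lebesgue (uniform) measure on [−½, ½]. Then: (i) W₂²(μ^0, μ^ε) = ε; (ii) ½W₂²(μ^ε, ρ) − ½W₂²(μ^0, ρ) = ε²/4 − ε/2; (iii) ∫ ‖x‖²/2 d(μ^ε − μ^0)(x) = −ε/2; consequently, for the Kantorovich potential ψ_{ρ→μ^0} that vanishes identically on [−1,1], the convexity gap satisfies ½W₂²(μ^ε,ρ) − ½W₂²(μ^0,ρ) − ⟨½‖·‖² − ψ_{ρ→μ^0}, μ^ε − μ^0⟩ = ε²/4 = ¼·W₂⁴(μ^0, μ^ε). -/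
noncomputable section

open MeasureTheory Metric Set
open scoped ENNReal NNReal RealInnerProductSpace

/-- `μ^ε = (½ - ε/2)(δ_{-1} + δ_1) + ε δ_0`. -/
def muEps (ε : ℝ) : Measure ℝ :=
  ENNReal.ofReal (1 / 2 - ε / 2) • (Measure.dirac (-1 : ℝ) + Measure.dirac (1 : ℝ)) +
    ENNReal.ofReal ε • Measure.dirac (0 : ℝ)

/-- `μ⁰ = ½(δ_{-1} + δ_1)`. -/
def muZero : Measure ℝ :=
  (2 : ℝ≥0∞)⁻¹ • (Measure.dirac (-1 : ℝ) + Measure.dirac (1 : ℝ))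

/-- `ρ` is the uniform (Lebesgue) measure on `[-½, ½]`. -/
def rhoUnif : Measure ℝ := volume.restrict (Set.Icc (-(1 / 2) : ℝ) (1 / 2))

lemma W2_sq_eq_s15 {a b : Measure ℝ} [IsFiniteMeasure a] (f g : ℝ → ℝ)
    (hf : Integrable f a) (hg : Integrable g b)
    (ha : Integrable (fun x => x ^ 2) a) (hb : Integrable (fun x => x ^ 2) b)
    (S T : Set ℝ) (hS : ∀ᵐ x ∂a, x ∈ S) (hT : ∀ᵐ x ∂b, x ∈ T)
    (hle : ∀ x ∈ S, ∀ y ∈ T, f x + g y ≤ ‖x - y‖ ^ 2)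
    (γ₀ : Measure (ℝ × ℝ)) (hγ₀ : γ₀ ∈ Couplings a b)
    (heq : ∀ᵐ p ∂γ₀, f p.1 + g p.2 = ‖p.1 - p.2‖ ^ 2) :
    W2 a b ^ 2 = ∫ x, f x ∂a + ∫ y, g y ∂b := by
  have key : ∀ γ ∈ Couplings a b, Integrable (fun p : ℝ × ℝ => f p.1 + g p.2) γ ∧
      ∫ p, (f p.1 + g p.2) ∂γ = ∫ x, f x ∂a + ∫ y, g y ∂b := by
    rintro γ ⟨h1, h2⟩
    have i1 : Integrable (fun p : ℝ × ℝ => f p.1) γ := by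
      rw [← h1] at hf
      exact hf.comp_measurable measurable_fst
    have i2 : Integrable (fun p : ℝ × ℝ => g p.2) γ := by
      rw [← h2] at hg
      exact hg.comp_measurable measurable_snd
    refine ⟨i1.add i2, ?_⟩
    rw [integral_add i1 i2]
    congr 1
    · rw [← h1] at hf ⊢
      rw [integral_map measurable_fst.aemeasurable hf.1]
    · rw [← h2] at hg ⊢
      rw [integral_map measurable_snd.aemeasurable hg.1]
  have hle' : ∀ γ ∈ Couplings a b, ∫ x, f x ∂a + ∫ y, g y ∂b ≤ ∫ p, ‖p.1 - p.2‖ ^ 2 ∂γ := by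
    intro γ hγ
    rw [← (key γ hγ).2]
    obtain ⟨h1, h2⟩ := id hγ
    have i1 : Integrable (fun p : ℝ × ℝ => p.1 ^ 2) γ := by
      rw [← h1] at ha
      exact ha.comp_measurable measurable_fst
    have i2 : Integrable (fun p : ℝ × ℝ => p.2 ^ 2) γ := by
      rw [← h2] at hb
      exact hb.comp_measurable measurable_snd
    have i3 : Integrable (fun p : ℝ × ℝ => ‖p.1 - p.2‖ ^ 2) γ := by
      refine ((i1.add i2).const_mul 2).mono' (by fun_prop) (Filter.Eventually.of_forall ?_)
      intro p
      simp only [Real.norm_eq_abs, sq_abs, Pi.add_apply, abs_sq]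
      nlinarith [sq_nonneg (p.1 + p.2)]
    have e1 : ∀ᵐ p ∂γ, p.1 ∈ S := by
      rw [← h1] at hS
      exact ae_of_ae_map measurable_fst.aemeasurable hS
    have e2 : ∀ᵐ p ∂γ, p.2 ∈ T := by
      rw [← h2] at hT
      exact ae_of_ae_map measurable_snd.aemeasurable hT
    refine integral_mono_ae (key γ hγ).1 i3 ?_
    filter_upwards [e1, e2] with p h1 h2 using hle _ h1 _ h2
  have h0 : ∫ p, ‖p.1 - p.2‖ ^ 2 ∂γ₀ = ∫ x, f x ∂a + ∫ y, g y ∂b := by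
    rw [← (key γ₀ hγ₀).2]
    exact integral_congr_ae (heq.mono fun p hp => hp.symm)
  have hl : IsLeast ((fun γ : Measure (ℝ × ℝ) => ∫ p, ‖p.1 - p.2‖ ^ 2 ∂γ) '' Couplings a b)
      (∫ x, f x ∂a + ∫ y, g y ∂b) := by
    refine ⟨⟨γ₀, hγ₀, h0⟩, ?_⟩
    rintro _ ⟨γ, hγ, rfl⟩
    exact hle' γ hγ
  unfold W2
  rw [hl.csInf_eq, Real.sq_sqrt]
  rw [← h0]
  positivity

lemma muZero_eq : muZero = muEps 0 := by
  have : ENNReal.ofReal (1 / 2) = 2⁻¹ := by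
    rw [one_div, ENNReal.ofReal_inv_of_pos (by norm_num)]; simp
  unfold muZero muEps
  rw [← this]
  simp

instance (ε : ℝ) : IsFiniteMeasure (muEps ε) := by
  unfold muEps
  refine ⟨?_⟩
  simp

lemma integrable_muEps (ε : ℝ) (f : ℝ → ℝ) : Integrable f (muEps ε) := by
  unfold muEps
  have h : ∀ x : ℝ, Integrable f (Measure.dirac x) := fun x => integrable_dirac (by simp)
  exact (((h _).add_measure (h _)).smul_measure (by simp)).add_measure
    ((h _).smul_measure (by simp))

lemma integral_muEps (ε : ℝ) (h0 : 0 ≤ ε) (h1 : ε < 1) (f : ℝ → ℝ) :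
    ∫ x, f x ∂(muEps ε) = (1 / 2 - ε / 2) * (f (-1) + f 1) + ε * f 0 := by
  have h : ∀ x : ℝ, Integrable f (Measure.dirac x) := fun x => integrable_dirac (by simp)
  unfold muEps
  rw [integral_add_measure (((h _).add_measure (h _)).smul_measure (by simp))
    ((h _).smul_measure (by simp)), integral_smul_measure, integral_smul_measure,
    integral_add_measure (h _) (h _), integral_dirac, integral_dirac, integral_dirac,
    ENNReal.toReal_ofReal (by linarith), ENNReal.toReal_ofReal h0]
  simp

lemma ae_muEps (ε : ℝ) : ∀ᵐ x ∂(muEps ε), x ∈ ({-1, 0, 1} : Set ℝ) := by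
  unfold muEps
  rw [ae_add_measure_iff]
  constructor <;> apply Measure.ae_smul_measure
  · rw [ae_add_measure_iff]; simp [ae_dirac_eq]
  · simp [ae_dirac_eq]

lemma rho_split (ε : ℝ) (h0 : 0 ≤ ε) (h1 : ε < 1) :
    volume.restrict (Ico (-(1/2)) (-(ε/2))) + volume.restrict (Ico (-(ε/2)) (ε/2)) +
      volume.restrict (Icc (ε/2) (1/2)) = rhoUnif := by
  unfold rhoUnif
  rw [← Measure.restrict_union _ measurableSet_Ico, Ico_union_Ico_eq_Ico (by linarith) (by linarith),
    ← Measure.restrict_union _ measurableSet_Icc, Ico_union_Icc_eq_Icc (by linarith) (by linarith)]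
  · rw [Set.disjoint_left]; rintro x ⟨_, h⟩ ⟨h', _⟩; linarith
  · rw [Set.disjoint_left]; rintro x ⟨_, h⟩ ⟨h', _⟩; linarith

lemma W2_rho (ε : ℝ) (h0 : 0 ≤ ε) (h1 : ε < 1) :
    W2 (muEps ε) rhoUnif ^ 2 = 1 / 12 + 1 / 2 - ε + ε ^ 2 / 2 := by
  have hc : ∀ g : ℝ → ℝ, Continuous g → Integrable g rhoUnif := fun g hg =>
    hg.continuousOn.integrableOn_Icc
  have hgc : Continuous (fun y : ℝ => y ^ 2 + min 0 (ε - 2 * |y|)) := by fun_prop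
  have hgc' := hc _ hgc
  rw [W2_sq_eq_s15 (fun x => x ^ 2 * (1 - ε)) (fun y => y ^ 2 + min 0 (ε - 2 * |y|))
    (integrable_muEps _ _) (hc _ hgc) (integrable_muEps _ _) (hc _ (by fun_prop))
    {-1, 0, 1} univ (ae_muEps ε) (by simp) ?_
    ((volume.restrict (Ico (-(1/2)) (-(ε/2)))).map (fun y => ((-1 : ℝ), y)) +
     (volume.restrict (Ico (-(ε/2)) (ε/2))).map (fun y => ((0 : ℝ), y)) +
     (volume.restrict (Icc (ε/2) (1/2))).map (fun y => ((1 : ℝ), y))) ?_ ?_]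
  · rw [integral_muEps ε h0 h1]
    have e := rho_split ε h0 h1
    rw [← e] at hgc' ⊢
    rw [integral_add_measure hgc'.left_of_add_measure hgc'.right_of_add_measure,
      integral_add_measure hgc'.left_of_add_measure.left_of_add_measure
        hgc'.left_of_add_measure.right_of_add_measure]
    have A : ∫ y in Ico (-(1/2)) (-(ε/2)), (y ^ 2 + min 0 (ε - 2 * |y|)) =
        ∫ y in (-(1/2))..(-(ε/2)), (y ^ 2 + (ε + 2 * y)) := by
      rw [intervalIntegral.integral_of_le (by linarith), ← integral_Ico_eq_integral_Ioc]
      refine setIntegral_congr_fun measurableSet_Ico ?_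
      rintro y ⟨_, hy⟩
      simp only
      rw [abs_of_nonpos (by linarith), min_eq_right (by linarith)]; ring
    have B : ∫ y in Ico (-(ε/2)) (ε/2), (y ^ 2 + min 0 (ε - 2 * |y|)) =
        ∫ y in (-(ε/2))..(ε/2), y ^ 2 := by
      rw [intervalIntegral.integral_of_le (by linarith), ← integral_Ico_eq_integral_Ioc]
      refine setIntegral_congr_fun measurableSet_Ico ?_
      rintro y ⟨hy', hy⟩
      simp only
      have : |y| ≤ ε / 2 := abs_le.2 ⟨hy', hy.le⟩
      rw [min_eq_left (by linarith)]; ring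
    have C : ∫ y in Icc (ε/2) (1/2), (y ^ 2 + min 0 (ε - 2 * |y|)) =
        ∫ y in (ε/2)..(1/2), (y ^ 2 + (ε - 2 * y)) := by
      rw [intervalIntegral.integral_of_le (by linarith), ← integral_Icc_eq_integral_Ioc]
      refine setIntegral_congr_fun measurableSet_Icc ?_
      rintro y ⟨hy, _⟩
      simp only
      rw [abs_of_nonneg (by linarith), min_eq_right (by linarith)]
    rw [A, B, C]
    have ii : ∀ (u v : ℝ) (g : ℝ → ℝ), Continuous g → IntervalIntegrable g volume u v :=
      fun u v g hg => hg.intervalIntegrable u v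
    rw [intervalIntegral.integral_add (ii _ _ _ (by fun_prop)) (ii _ _ _ (by fun_prop)),
      intervalIntegral.integral_add (ii _ _ _ (by fun_prop)) (ii _ _ _ (by fun_prop)),
      intervalIntegral.integral_add (ii _ _ _ (by fun_prop)) (ii _ _ _ (by fun_prop)),
      intervalIntegral.integral_sub (ii _ _ _ (by fun_prop)) (ii _ _ _ (by fun_prop)),
      intervalIntegral.integral_const_mul, intervalIntegral.integral_const_mul,
      integral_pow, integral_pow, integral_pow, integral_id, integral_id,
      intervalIntegral.integral_const, intervalIntegral.integral_const]
    simp only [smul_eq_mul]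
    push_cast
    ring
  · rintro x hx y -
    have k1 := min_le_left 0 (ε - 2 * |y|)
    have k2 := min_le_right 0 (ε - 2 * |y|)
    have k3 := le_abs_self y
    have k4 := neg_abs_le y
    rw [Real.norm_eq_abs, sq_abs]
    rcases hx with rfl | rfl | rfl <;> nlinarith
  · constructor
    · rw [Measure.map_add _ _ measurable_fst, Measure.map_add _ _ measurable_fst,
        Measure.map_map measurable_fst (by fun_prop), Measure.map_map measurable_fst (by fun_prop),
        Measure.map_map measurable_fst (by fun_prop)]
      simp only [Function.comp_def, Measure.map_const, Measure.restrict_apply_univ,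
        Real.volume_Ico, Real.volume_Icc]
      unfold muEps
      rw [smul_add, show -(ε/2) - -(1/2) = 1/2 - ε/2 by ring, show ε/2 - -(ε/2) = ε by ring]
      abel
    · rw [Measure.map_add _ _ measurable_snd, Measure.map_add _ _ measurable_snd,
        Measure.map_map measurable_snd (by fun_prop), Measure.map_map measurable_snd (by fun_prop),
        Measure.map_map measurable_snd (by fun_prop)]
      simp only [Function.comp_def, Measure.map_id']
      exact rho_split ε h0 h1
  · have hm : MeasurableSet {p : ℝ × ℝ | p.1 ^ 2 * (1 - ε) + (p.2 ^ 2 + min 0 (ε - 2 * |p.2|)) =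
        ‖p.1 - p.2‖ ^ 2} := by
      apply measurableSet_eq_fun <;> fun_prop
    rw [ae_add_measure_iff, ae_add_measure_iff, ae_map_iff (by fun_prop) hm,
      ae_map_iff (by fun_prop) hm, ae_map_iff (by fun_prop) hm]
    simp only [Real.norm_eq_abs, sq_abs]
    refine ⟨⟨?_, ?_⟩, ?_⟩
    · filter_upwards [ae_restrict_mem measurableSet_Ico] with y ⟨_, hy⟩
      rw [abs_of_nonpos (by linarith), min_eq_right (by linarith)]; ring
    · filter_upwards [ae_restrict_mem measurableSet_Ico] with y ⟨hy', hy⟩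
      have : |y| ≤ ε / 2 := abs_le.2 ⟨hy', hy.le⟩
      rw [min_eq_left (by linarith)]; ring
    · filter_upwards [ae_restrict_mem measurableSet_Icc] with y ⟨hy, _⟩
      rw [abs_of_nonneg (by linarith), min_eq_right (by linarith)]; ring

lemma W2_zero (ε : ℝ) (h0 : 0 < ε) (h1 : ε < 1) : W2 muZero (muEps ε) ^ 2 = ε := by
  rw [muZero_eq]
  have hS : ∀ᵐ x ∂(muEps 0), x ∈ ({-1, 1} : Set ℝ) := by
    rw [← muZero_eq]
    unfold muZero
    apply Measure.ae_smul_measure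
    rw [ae_add_measure_iff]; simp [ae_dirac_eq]
  rw [W2_sq_eq_s15 (fun _ => 0) (fun y => 1 - y ^ 2)
    (integrable_muEps _ _) (integrable_muEps _ _) (integrable_muEps _ _) (integrable_muEps _ _)
    {-1, 1} {-1, 0, 1} hS (ae_muEps ε) ?_
    (ENNReal.ofReal (1/2 - ε/2) • (Measure.dirac ((-1 : ℝ), (-1 : ℝ)) + Measure.dirac ((1 : ℝ), (1 : ℝ)))
      + ENNReal.ofReal (ε/2) • (Measure.dirac ((-1 : ℝ), (0 : ℝ)) + Measure.dirac ((1 : ℝ), (0 : ℝ))))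
    ?_ ?_]
  · rw [integral_muEps ε h0.le h1]; simp
  · rintro x (rfl | rfl) y (rfl | rfl | rfl) <;> norm_num
  · constructor
    · simp only [Measure.map_add _ _ measurable_fst, Measure.map_smul,
        Measure.map_dirac' measurable_fst]
      rw [← add_smul, ← ENNReal.ofReal_add (by linarith) (by linarith)]
      simp [muEps]
    · simp only [Measure.map_add _ _ measurable_snd, Measure.map_smul,
        Measure.map_dirac' measurable_snd]
      rw [← two_smul ENNReal (Measure.dirac (0:ℝ)), smul_smul]
      unfold muEps
      congr 2
      rw [show (2:ENNReal) = ENNReal.ofReal 2 by simp, ← ENNReal.ofReal_mul (by linarith)]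
      congr 1; ring
  · rw [ae_add_measure_iff]
    constructor <;> apply Measure.ae_smul_measure <;> rw [ae_add_measure_iff] <;>
      simp [ae_dirac_eq]

/-- **Lower bound on the strong convexity exponent (Remark).**
For `0 < ε < 1`: (i) `W₂²(μ⁰, μ^ε) = ε`;
(ii) `½W₂²(μ^ε,ρ) - ½W₂²(μ⁰,ρ) = ε²/4 - ε/2`;
(iii) `⟨½‖·‖², μ^ε - μ⁰⟩ = -ε/2`; hence, for the Kantorovich potential
`ψ_{ρ→μ⁰}` vanishing on `[-1,1]`, the convexity gap equals
`ε²/4 = ¼ W₂⁴(μ⁰, μ^ε)`. -/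
theorem exponent_lower_bound_example (ε : ℝ) (hε : 0 < ε) (hε' : ε < 1) :
    W2 muZero (muEps ε) ^ 2 = ε ∧
    (1 / 2) * W2 (muEps ε) rhoUnif ^ 2 - (1 / 2) * W2 muZero rhoUnif ^ 2 =
      ε ^ 2 / 4 - ε / 2 ∧
    (∫ x, x ^ 2 / 2 ∂(muEps ε)) - (∫ x, x ^ 2 / 2 ∂muZero) = -ε / 2 ∧
    (1 / 2) * W2 (muEps ε) rhoUnif ^ 2 - (1 / 2) * W2 muZero rhoUnif ^ 2 -
        ((∫ x, x ^ 2 / 2 ∂(muEps ε)) - ∫ x, x ^ 2 / 2 ∂muZero) = ε ^ 2 / 4 ∧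
    ε ^ 2 / 4 = (1 / 4) * W2 muZero (muEps ε) ^ 4 := by
  have a := W2_zero ε hε hε'
  have b := W2_rho ε hε.le hε'
  have c := W2_rho 0 le_rfl one_pos
  rw [← muZero_eq] at c
  have d : (∫ x, x ^ 2 / 2 ∂(muEps ε)) - (∫ x, x ^ 2 / 2 ∂muZero) = -ε / 2 := by
    rw [muZero_eq, integral_muEps ε hε.le hε', integral_muEps 0 le_rfl one_pos]
    ring
  refine ⟨a, ?_, d, ?_, ?_⟩
  · rw [b, c]; ring
  · rw [d, b, c]; ring
  · rw [show W2 muZero (muEps ε) ^ 4 = (W2 muZero (muEps ε) ^ 2) ^ 2 by ring, a]; ring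
end
end
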